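/- Let w be a finite nonempty rich word over an alphabet of size q, let n = |w|, and let t be a positive integer such that ∑_{i=1}^{t} i·⌊c₁ i^{c₂ ln i}⌋ ≥ n. Then the length of the UPS-factorization of w satisfies LUF(w) ≤ ∑_{i=1}^{t} c₁ i^{c₂ ln i}. -/

import Mathlib

/-- A finite word is a palindrome if it equals its reversal. -/
def IsPalindrome {A : Type*} (w : List A) : Prop := w.reverse = w

/-- A finite word `w` is rich if it contains `|w| + 1` distinct palindromic
factors, including the empty word. -/
def IsRichWord {A : Type*} (w : List A) : Prop :=
  {u : List A | u <:+: w ∧ IsPalindrome u}.ncard = w.length + 1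

/-- `ws = [w_p, w_{p-1}, …, w_1]` is the UPS-factorization of `w`:
the `w_i` are distinct nonempty palindromes, `w = w_p w_{p-1} ⋯ w_1`, and
each `w_i` is the longest palindromic suffix of `w_p w_{p-1} ⋯ w_i`. -/
def IsUPSFactorization {A : Type*} (w : List A) (ws : List (List A)) : Prop :=
  ws ≠ [] ∧ ws.Nodup ∧ (∀ u ∈ ws, u ≠ [] ∧ IsPalindrome u) ∧ w = ws.flatten ∧
    ∀ j (h : j < ws.length),
      ws.get ⟨j, h⟩ <:+ (ws.take (j + 1)).flatten ∧
        ∀ v : List A, v <:+ (ws.take (j + 1)).flatten → IsPalindrome v →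
          v.length ≤ (ws.get ⟨j, h⟩).length

/-!
In a rich word, prepending a letter creates exactly one new palindromic factor, a palindromic
prefix `s` that does not occur later. If it also creates a new non-palindromic factor `x` of
length `n + 1` up to reversal, then `x` is a prefix, and its prefix `y` of length `n` is new up to
reversal: otherwise `y` is shorter than `s`, so `x` is a proper prefix of `s` and its mirror image
occurs in `s` at a later position. Hence, with `C n` the number of factors of length `n` up to
reversal, there are at most `C n` classes of non-palindromic factors of length `n + 1`, while a
palindrome is determined by its first half, and so `C (n + 1) ≤ C n + 2 C ⌈(n + 1) / 2⌉`.
This recurrence gives `C n ≤ c₁ n ^ (c₂ log n)`. In particular there are few palindromic factors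
of each length, and a family of distinct ones is largest, for a given total length, when it
consists of the shortest ones.
-/

open Finset

section Palindrome

variable {A : Type*} {a : A} {w x u v : List A}

namespace IsPalindrome

lemma reverse_suffix_of_prefix (hu : IsPalindrome u) (hx : x <+: u) : x.reverse <:+ u :=
  hu ▸ List.reverse_suffix.2 hx

lemma reverse_infix_of_prefix_cons (hu : IsPalindrome u) (hxu : x <+: u) (hne : x ≠ u)
    (huw : u <+: a :: w) : x.reverse <:+: w := by
  rcases List.prefix_cons_iff.1 huw with rfl | ⟨t, rfl, ht⟩
  · exact absurd (List.prefix_nil.1 hxu) hne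
  rcases List.suffix_cons_iff.1 (hu.reverse_suffix_of_prefix hxu) with h | h
  · exact absurd (hxu.eq_of_length (by simpa using congrArg List.length h)) hne
  · exact h.isInfix.trans ht.isInfix

lemma take_append_reverse_take (hu : IsPalindrome u) (k : ℕ) :
    u.take k ++ (u.take (u.length - k)).reverse = u := by
  rw [← List.drop_reverse, show u.reverse = u from hu, List.take_append_drop]

lemma eq_of_take_eq (hu : IsPalindrome u) (hv : IsPalindrome v) (hlen : u.length = v.length)
    {k : ℕ} (hk : u.length ≤ 2 * k) (h : u.take k = v.take k) : u = v := by
  have h' : u.take (u.length - k) = v.take (u.length - k) := by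
    have := congrArg (List.take (u.length - k)) h
    rwa [List.take_take, List.take_take, min_eq_left (by omega)] at this
  rw [← hu.take_append_reverse_take k, ← hv.take_append_reverse_take k, h, h', hlen]

end IsPalindrome

end Palindrome

section RichWord

variable {A : Type*} {a : A} {w x y : List A}

/-- The set of palindromic factors of `w`, whose cardinality defines richness. -/
def palindromicFactors (w : List A) : Set (List A) := {u | u <:+: w ∧ IsPalindrome u}

lemma finite_palindromicFactors (w : List A) : (palindromicFactors w).Finite := by
  classical
  exact w.sublists.toFinset.finite_toSet.subset fun u hu ↦ by simpa using hu.1.sublist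

lemma subsingleton_palindromicFactors_cons_diff (a : A) (w : List A) :
    (palindromicFactors (a :: w) \ palindromicFactors w).Subsingleton := by
  have prefix_of_new {u} (hu : u ∈ palindromicFactors (a :: w) \ palindromicFactors w) :
      u <+: a :: w :=
    (List.infix_cons_iff.1 hu.1.1).resolve_right fun h ↦ hu.2 ⟨h, hu.1.2⟩
  intro u hu v hv
  wlog hle : u.length ≤ v.length generalizing u v
  · exact (this hv hu (le_of_not_ge hle)).symm
  have huv := List.prefix_of_prefix_length_le (prefix_of_new hu) (prefix_of_new hv) hle
  by_contra hne
  have hinfix := hv.1.2.reverse_infix_of_prefix_cons huv hne (prefix_of_new hv)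
  rw [hu.1.2] at hinfix
  exact hu.2 ⟨hinfix, hu.1.2⟩

lemma ncard_palindromicFactors_cons_le (a : A) (w : List A) :
    (palindromicFactors (a :: w)).ncard ≤ (palindromicFactors w).ncard + 1 := by
  have hdiff : (palindromicFactors (a :: w) \ palindromicFactors w).ncard ≤ 1 :=
    (Set.ncard_le_one ((finite_palindromicFactors _).sdiff)).2
      fun _ hu _ hv ↦ subsingleton_palindromicFactors_cons_diff a w hu hv
  have := Set.ncard_le_ncard_sdiff_add_ncard (palindromicFactors (a :: w)) _
    (finite_palindromicFactors w)
  omega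

lemma ncard_palindromicFactors_le (w : List A) :
    (palindromicFactors w).ncard ≤ w.length + 1 := by
  induction w with
  | nil =>
    have hsub : palindromicFactors ([] : List A) ⊆ {[]} := fun u hu ↦ List.infix_nil.1 hu.1
    simpa using Set.ncard_le_ncard hsub
  | cons a w ih =>
    have := ncard_palindromicFactors_cons_le a w
    rw [List.length_cons]
    omega

namespace IsRichWord

lemma of_cons (h : IsRichWord (a :: w)) : IsRichWord w := by
  have hcard : (palindromicFactors (a :: w)).ncard = w.length + 1 + 1 := h
  have := ncard_palindromicFactors_cons_le a w
  have := ncard_palindromicFactors_le w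
  change (palindromicFactors w).ncard = w.length + 1
  omega

lemma exists_palindrome_prefix_not_infix (h : IsRichWord (a :: w)) :
    ∃ s, IsPalindrome s ∧ s <+: a :: w ∧ ¬ s <:+: w := by
  by_contra! hold
  have hsub : palindromicFactors (a :: w) ⊆ palindromicFactors w := fun u ⟨hu, hpal⟩ ↦
    ⟨(List.infix_cons_iff.1 hu).elim (hold u hpal) id, hpal⟩
  have hcard : (palindromicFactors (a :: w)).ncard = w.length + 1 + 1 := h
  have := Set.ncard_le_ncard hsub (finite_palindromicFactors w)
  have := ncard_palindromicFactors_le w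
  omega

lemma not_infix_of_succ_length_prefix (h : IsRichWord (a :: w)) (hx : x <+: a :: w)
    (hxpal : ¬ IsPalindrome x) (hxnew : ¬ x.reverse <:+: w) (hy : y <+: a :: w)
    (hlen : x.length = y.length + 1) : ¬ y <:+: w ∧ ¬ y.reverse <:+: w := by
  obtain ⟨s, hs, hsw, hsnew⟩ := h.exists_palindrome_prefix_not_infix
  have hsy : s <+: y := by
    refine List.prefix_of_prefix_length_le hsw hy ?_
    by_contra! hlt
    have hxs : x <+: s := List.prefix_of_prefix_length_le hx hsw (by omega)
    exact hxnew (hs.reverse_infix_of_prefix_cons hxs (fun hxs ↦ hxpal (hxs ▸ hs)) hsw)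
  refine ⟨fun hyw ↦ hsnew (hsy.isInfix.trans hyw), fun hyw ↦ hsnew (.trans ?_ hyw)⟩
  exact (hs ▸ List.reverse_suffix.2 hsy : s <:+ y.reverse).isInfix

end IsRichWord

end RichWord

section ReversalClasses

variable {A : Type*} {a : A} {n : ℕ} {w u v : List A} {c : Sym2 (List A)}

open Classical in
/-- The factors of `w` of length `n`. -/
noncomputable def factorsOfLength (w : List A) (n : ℕ) : Finset (List A) :=
  w.sublists.toFinset.filter fun u ↦ u <:+: w ∧ u.length = n

lemma mem_factorsOfLength : u ∈ factorsOfLength w n ↔ u <:+: w ∧ u.length = n := by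
  simp only [factorsOfLength, mem_filter, List.mem_toFinset, List.mem_sublists,
    and_iff_right_iff_imp]
  exact fun h ↦ h.1.sublist

open Classical in
/-- The palindromic factors of `w` of length `n`. -/
noncomputable def palindromesOfLength (w : List A) (n : ℕ) : Finset (List A) :=
  (factorsOfLength w n).filter IsPalindrome

lemma mem_palindromesOfLength :
    u ∈ palindromesOfLength w n ↔ (u <:+: w ∧ u.length = n) ∧ IsPalindrome u := by
  simp only [palindromesOfLength, mem_filter, mem_factorsOfLength]

/-- The class of a word up to reversal, encoded as the unordered pair of the word and its mirror
image; palindromes are the words whose class lies on the diagonal. -/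
def reversalClass (u : List A) : Sym2 (List A) := s(u, u.reverse)

lemma reversalClass_eq_iff : reversalClass u = reversalClass v ↔ u = v ∨ u = v.reverse := by
  simp only [reversalClass, Sym2.eq_iff, List.reverse_eq_iff, List.reverse_reverse,
    and_self]

lemma isDiag_reversalClass : (reversalClass u).IsDiag ↔ IsPalindrome u := by
  rw [reversalClass, Sym2.mk_isDiag_iff, IsPalindrome, eq_comm]

open Classical in
/-- The factors of `w` of length `n` up to reversal. -/
noncomputable def factorClasses (w : List A) (n : ℕ) : Finset (Sym2 (List A)) :=
  (factorsOfLength w n).image reversalClass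

lemma reversalClass_mem_factorClasses :
    reversalClass u ∈ factorClasses w n ↔ (u <:+: w ∨ u.reverse <:+: w) ∧ u.length = n := by
  simp only [factorClasses, mem_image, mem_factorsOfLength, reversalClass_eq_iff]
  constructor
  · rintro ⟨v, ⟨hv, hlen⟩, rfl | rfl⟩
    · exact ⟨.inl hv, hlen⟩
    · exact ⟨.inr hv, by simpa using hlen⟩
  · rintro ⟨hu | hu, hlen⟩
    · exact ⟨u, ⟨hu, hlen⟩, .inl rfl⟩
    · exact ⟨u.reverse, ⟨hu, by simpa using hlen⟩, .inr rfl⟩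

lemma factorClasses_subset_cons (a : A) (w : List A) (n : ℕ) :
    factorClasses w n ⊆ factorClasses (a :: w) n := by
  classical
  refine image_subset_image fun u hu ↦ ?_
  rw [mem_factorsOfLength] at hu ⊢
  exact ⟨List.infix_cons hu.1, hu.2⟩

lemma exists_prefix_of_mem_factorClasses_cons (hc : c ∈ factorClasses (a :: w) n)
    (hnew : c ∉ factorClasses w n) :
    ∃ x, x <+: a :: w ∧ x.length = n ∧ reversalClass x = c := by
  classical
  obtain ⟨x, hx, rfl⟩ := mem_image.1 hc
  rw [mem_factorsOfLength] at hx
  rw [reversalClass_mem_factorClasses] at hnew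
  exact ⟨x, (List.infix_cons_iff.1 hx.1).resolve_right fun h ↦ hnew ⟨.inl h, hx.2⟩, hx.2, rfl⟩

open Classical in
/-- The non-palindromic factors of `w` of length `n` up to reversal. -/
noncomputable def nonpalindromeClasses (w : List A) (n : ℕ) : Finset (Sym2 (List A)) :=
  (factorClasses w n).filter fun c ↦ ¬ c.IsDiag

lemma card_nonpalindromeClasses_cons_le (a : A) (w : List A) (n : ℕ) :
    #(nonpalindromeClasses (a :: w) n) ≤ #(nonpalindromeClasses w n) + 1 := by
  classical
  have hdiff : #(nonpalindromeClasses (a :: w) n \ nonpalindromeClasses w n) ≤ 1 := by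
    have exists_prefix {c}
        (hc : c ∈ nonpalindromeClasses (a :: w) n \ nonpalindromeClasses w n) :
        ∃ x, x <+: a :: w ∧ x.length = n ∧ reversalClass x = c := by
      simp only [nonpalindromeClasses, mem_sdiff, mem_filter] at hc
      exact exists_prefix_of_mem_factorClasses_cons hc.1.1 fun h ↦ hc.2 ⟨h, hc.1.2⟩
    refine card_le_one.2 fun c hc c' hc' ↦ ?_
    obtain ⟨x, hx, hxlen, rfl⟩ := exists_prefix hc
    obtain ⟨x', hx', hxlen', rfl⟩ := exists_prefix hc'
    rw [(List.prefix_of_prefix_length_le hx hx' (by omega)).eq_of_length (by omega)]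
  have := card_le_card_sdiff_add_card
    (s := nonpalindromeClasses (a :: w) n) (t := nonpalindromeClasses w n)
  omega

lemma IsRichWord.card_factorClasses_lt_cons (hw : IsRichWord (a :: w))
    (hnew : ¬ nonpalindromeClasses (a :: w) (n + 1) ⊆ nonpalindromeClasses w (n + 1)) :
    #(factorClasses w n) < #(factorClasses (a :: w) n) := by
  obtain ⟨c, hc, hcw⟩ := not_subset.1 hnew
  simp only [nonpalindromeClasses, mem_filter, not_and_not_right] at hc hcw
  have hcw : c ∉ factorClasses w (n + 1) := fun h ↦ hc.2 (hcw h)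
  obtain ⟨x, hx, hxlen, rfl⟩ := exists_prefix_of_mem_factorClasses_cons hc.1 hcw
  rw [reversalClass_mem_factorClasses] at hcw
  have hlen : (x.take n).length = n := by simp [hxlen]
  have hy : x.take n <+: a :: w := (List.take_prefix n x).trans hx
  have hynew := hw.not_infix_of_succ_length_prefix hx (isDiag_reversalClass.not.1 hc.2)
    (fun h ↦ hcw ⟨.inr h, hxlen⟩) hy (by omega)
  refine card_lt_card ((ssubset_iff_of_subset (factorClasses_subset_cons a w n)).2
    ⟨reversalClass (x.take n), ?_, ?_⟩)
  · exact reversalClass_mem_factorClasses.2 ⟨.inl hy.isInfix, hlen⟩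
  · exact fun h ↦ (reversalClass_mem_factorClasses.1 h).1.elim hynew.1 hynew.2

lemma IsRichWord.card_nonpalindromeClasses_succ_le (hw : IsRichWord w) (n : ℕ) :
    #(nonpalindromeClasses w (n + 1)) ≤ #(factorClasses w n) := by
  induction w with
  | nil =>
    have hempty : factorsOfLength ([] : List A) (n + 1) = ∅ := by
      refine eq_empty_of_forall_notMem fun u hu ↦ ?_
      rw [mem_factorsOfLength, List.infix_nil] at hu
      simp [hu.1] at hu
    simp [nonpalindromeClasses, factorClasses, hempty]
  | cons a w ih =>
    have ih := ih hw.of_cons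
    by_cases hsub : nonpalindromeClasses (a :: w) (n + 1) ⊆ nonpalindromeClasses w (n + 1)
    · exact (card_le_card hsub).trans
        (ih.trans (card_le_card (factorClasses_subset_cons a w n)))
    · have := card_nonpalindromeClasses_cons_le a w (n + 1)
      have := hw.card_factorClasses_lt_cons hsub
      omega

open Classical in
lemma card_filter_isDiag_factorClasses (w : List A) (n : ℕ) :
    #((factorClasses w n).filter Sym2.IsDiag) = #(palindromesOfLength w n) := by
  have himage : (factorClasses w n).filter Sym2.IsDiag =
      (palindromesOfLength w n).image reversalClass := by
    simp only [factorClasses, palindromesOfLength, filter_image, isDiag_reversalClass]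
  rw [himage]
  refine card_image_of_injOn fun u _ v hv h ↦ ?_
  have hvpal : v.reverse = v := (mem_palindromesOfLength.1 (mem_coe.1 hv)).2
  simpa [hvpal] using reversalClass_eq_iff.1 h

lemma card_palindromesOfLength_le_card_factorClasses (w : List A) (n : ℕ) :
    #(palindromesOfLength w n) ≤ #(factorClasses w n) := by
  classical
  exact card_filter_isDiag_factorClasses w n ▸ card_filter_le _ _

lemma IsRichWord.card_factorClasses_succ_le (hw : IsRichWord w) (n : ℕ) :
    #(factorClasses w (n + 1)) ≤ #(factorClasses w n) + #(palindromesOfLength w (n + 1)) := by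
  classical
  rw [← card_filter_add_card_filter_not (s := factorClasses w (n + 1)) Sym2.IsDiag,
    card_filter_isDiag_factorClasses, add_comm]
  exact Nat.add_le_add_right (hw.card_nonpalindromeClasses_succ_le n) _

lemma card_factorsOfLength_le (w : List A) (n : ℕ) :
    #(factorsOfLength w n) ≤ 2 * #(factorClasses w n) := by
  classical
  refine card_le_mul_card_image _ _ fun c hc ↦ ?_
  obtain ⟨u, -, rfl⟩ := mem_image.1 hc
  have hfiber : {v ∈ factorsOfLength w n | reversalClass v = reversalClass u} ⊆
      {u, u.reverse} := fun v hv ↦ by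
    simpa using reversalClass_eq_iff.1 (mem_filter.1 hv).2
  exact (card_le_card hfiber).trans card_le_two

lemma card_palindromesOfLength_succ_le (w : List A) (n : ℕ) :
    #(palindromesOfLength w (n + 1)) ≤ #(factorsOfLength w (n / 2 + 1)) := by
  refine card_le_card_of_injOn (List.take (n / 2 + 1)) (fun u hu ↦ ?_) fun u hu v hv h ↦ ?_
  · obtain ⟨⟨huw, hlen⟩, -⟩ := mem_palindromesOfLength.1 (mem_coe.1 hu)
    refine mem_coe.2 (mem_factorsOfLength.2 ⟨(List.take_prefix _ _).isInfix.trans huw, ?_⟩)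
    rw [List.length_take]
    omega
  · obtain ⟨⟨-, hulen⟩, hupal⟩ := mem_palindromesOfLength.1 (mem_coe.1 hu)
    obtain ⟨⟨-, hvlen⟩, hvpal⟩ := mem_palindromesOfLength.1 (mem_coe.1 hv)
    exact hupal.eq_of_take_eq hvpal (hulen.trans hvlen.symm) (by omega) h

lemma IsRichWord.card_factorClasses_succ_le_add_two_mul (hw : IsRichWord w) (n : ℕ) :
    #(factorClasses w (n + 1)) ≤ #(factorClasses w n) + 2 * #(factorClasses w (n / 2 + 1)) :=
  (hw.card_factorClasses_succ_le n).trans <| Nat.add_le_add_left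
    ((card_palindromesOfLength_succ_le w n).trans (card_factorsOfLength_le w _)) _

lemma card_factorClasses_le_pow [Fintype A] (w : List A) (n : ℕ) :
    #(factorClasses w n) ≤ Fintype.card A ^ n := by
  classical
  have hsub : factorsOfLength w n ⊆ (univ : Finset (List.Vector A n)).image List.Vector.toList :=
    fun u hu ↦ mem_image.2 ⟨⟨u, (mem_factorsOfLength.1 hu).2⟩, mem_univ _, rfl⟩
  calc #(factorClasses w n) ≤ #(factorsOfLength w n) := card_image_le
    _ ≤ #(univ : Finset (List.Vector A n)) := (card_le_card hsub).trans card_image_le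
    _ = Fintype.card A ^ n := card_vector n

end ReversalClasses

section Growth

open Real

variable {c c₁ c₂ x y : ℝ}

lemma rpow_mul_log_self (hx : 0 < x) (c : ℝ) : x ^ (c * log x) = exp (c * log x ^ 2) := by
  rw [rpow_def_of_pos hx]
  ring_nf

lemma rpow_mul_log_self_le (hc : 0 ≤ c) (hx : 1 ≤ x) (hxy : x ≤ y) :
    x ^ (c * log x) ≤ y ^ (c * log y) := by
  have hlog : 0 ≤ log x := log_nonneg hx
  rw [rpow_mul_log_self (by linarith), rpow_mul_log_self (by linarith)]
  gcongr

lemma three_mul_mul_rpow_mul_log_le (hc : 2 ≤ c * log (3 / 2)) (hx : 3 ≤ x) :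
    3 * x * (2 / 3 * x) ^ (c * log (2 / 3 * x)) ≤ x ^ (c * log x) := by
  have hx0 : 0 < x := by linarith
  have hlog : log (2 / 3 * x) = log x - log (3 / 2) := by
    rw [← log_div hx0.ne' (by norm_num)]
    congr 1
    ring
  have h3x : 3 * x = exp (log 3 + log x) := by
    rw [exp_add, exp_log (by norm_num), exp_log hx0]
  rw [rpow_mul_log_self (by positivity), rpow_mul_log_self hx0, hlog, h3x, ← exp_add, exp_le_exp]
  have h3 : log 3 ≤ log x := log_le_log (by norm_num) hx
  have h32 : log (3 / 2) ≤ log x := log_le_log (by norm_num) (by linarith)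
  have hpos : 0 < log (3 / 2) := log_pos (by norm_num)
  calc log 3 + log x + c * (log x - log (3 / 2)) ^ 2
      ≤ 2 * (2 * log x - log (3 / 2)) + c * (log x - log (3 / 2)) ^ 2 := by linarith
    _ ≤ c * log (3 / 2) * (2 * log x - log (3 / 2)) + c * (log x - log (3 / 2)) ^ 2 := by
      gcongr
      linarith
    _ = c * log x ^ 2 := by ring

lemma le_add_two_mul_of_succ_le {f : ℕ → ℝ} (hf : ∀ n, f (n + 1) ≤ f n + 2 * f (n / 2 + 1))
    {M : ℝ} {n : ℕ} (hM : ∀ k < n, f (k / 2 + 1) ≤ M) : f n ≤ f 0 + 2 * n * M := by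
  induction n with
  | zero => simp
  | succ n ih =>
    have := ih fun k hk ↦ hM k (by omega)
    have := hM n n.lt_succ_self
    have := hf n
    push_cast
    linarith

lemma le_mul_rpow_mul_log_of_succ_le {f : ℕ → ℝ}
    (hf : ∀ n, f (n + 1) ≤ f n + 2 * f (n / 2 + 1)) (hf₀ : f 0 ≤ 1) (hf₁ : f 1 ≤ c₁)
    (hf₂ : f 2 ≤ c₁) (hc₁ : 1 ≤ c₁) (hc₂ : 2 ≤ c₂ * log (3 / 2)) {n : ℕ} (hn : 1 ≤ n) :
    f n ≤ c₁ * (n : ℝ) ^ (c₂ * log n) := by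
  have hc₂_nonneg : 0 ≤ c₂ :=
    (pos_of_mul_pos_left (by linarith) (log_nonneg (by norm_num))).le
  have hc₁_le {x : ℝ} (hx : 1 ≤ x) : c₁ ≤ c₁ * x ^ (c₂ * log x) :=
    le_mul_of_one_le_right (by linarith)
      (by simpa using rpow_mul_log_self_le hc₂_nonneg le_rfl hx)
  induction n using Nat.strong_induction_on with
  | _ n ih =>
    obtain rfl | rfl | hn3 : n = 1 ∨ n = 2 ∨ 3 ≤ n := by omega
    · exact hf₁.trans (hc₁_le (by norm_num))
    · exact hf₂.trans (hc₁_le (by norm_num))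
    have hn3' : (3 : ℝ) ≤ n := by exact_mod_cast hn3
    set M : ℝ := c₁ * (2 / 3 * n) ^ (c₂ * log (2 / 3 * n)) with hM
    have hM_one : 1 ≤ M := hc₁.trans (hc₁_le (by linarith))
    have hhalf : ∀ k < n, f (k / 2 + 1) ≤ M := fun k hk ↦ by
      have hle : ((k / 2 + 1 : ℕ) : ℝ) ≤ 2 / 3 * n := by
        have : 3 * (k / 2 + 1) ≤ 2 * n := by omega
        have : (3 : ℝ) * (k / 2 + 1 : ℕ) ≤ 2 * n := by exact_mod_cast this
        linarith
      refine (ih _ (by omega) (by omega)).trans ?_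
      rw [hM]
      gcongr
      exact rpow_mul_log_self_le hc₂_nonneg (by simp) hle
    calc f n ≤ f 0 + 2 * n * M := le_add_two_mul_of_succ_le hf hhalf
      _ ≤ 3 * n * M := by nlinarith
      _ = c₁ * (3 * n * (2 / 3 * n) ^ (c₂ * log (2 / 3 * n))) := by rw [hM]; ring
      _ ≤ c₁ * (n : ℝ) ^ (c₂ * log n) := by
        gcongr
        exact three_mul_mul_rpow_mul_log_le hc₂ hn3'

end Growth

lemma IsRichWord.card_factorClasses_le {A : Type*} [Fintype A] [Nonempty A] {w : List A}
    (hw : IsRichWord w) {c₁ c₂ : ℝ} (hc₁ : (Fintype.card A : ℝ) ^ 2 ≤ c₁)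
    (hc₂ : 2 ≤ c₂ * Real.log (3 / 2)) {n : ℕ} (hn : 1 ≤ n) :
    (#(factorClasses w n) : ℝ) ≤ c₁ * (n : ℝ) ^ (c₂ * Real.log n) := by
  have hq : (1 : ℝ) ≤ Fintype.card A := by exact_mod_cast Fintype.card_pos
  have hpow (k : ℕ) : (#(factorClasses w k) : ℝ) ≤ (Fintype.card A : ℝ) ^ k := by
    exact_mod_cast card_factorClasses_le_pow w k
  refine le_mul_rpow_mul_log_of_succ_le (f := fun k ↦ #(factorClasses w k))
    (fun k ↦ ?_) (by simpa using hpow 0) ?_ ((hpow 2).trans hc₁) ?_ hc₂ hn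
  · exact_mod_cast hw.card_factorClasses_succ_le_add_two_mul k
  · exact ((hpow 1).trans (pow_le_pow_right₀ hq one_le_two)).trans hc₁
  · exact (one_le_pow₀ hq).trans hc₁

lemma card_le_sum_of_card_fiber_le {ι R : Type*} [CommRing R] [LinearOrder R]
    [IsStrictOrderedRing R] {S : Finset ι} {ℓ : ι → ℕ} (hℓ : ∀ u ∈ S, 1 ≤ ℓ u) {F : ℕ → R} {t : ℕ}
    (hF : ∀ i ∈ Icc 1 t, (#{u ∈ S | ℓ u = i} : R) ≤ F i)
    (hsum : ∑ u ∈ S, (ℓ u : R) ≤ ∑ i ∈ Icc 1 t, (i : R) * F i) :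
    (#S : R) ≤ ∑ i ∈ Icc 1 t, F i := by
  -- Give a member of size `i` the weight `t + 1 - i`, which is not positive for sizes beyond `t`.
  have hweight : ∀ u ∈ S, (t + 1 - ℓ u : R) ≤
      ∑ i ∈ Icc 1 t, if ℓ u = i then (t + 1 - i : R) else 0 := fun u hu ↦ by
    rw [sum_ite_eq]
    split_ifs with h
    · rfl
    · have : t + 1 ≤ ℓ u := by
        have := hℓ u hu
        rw [mem_Icc] at h
        omega
      exact sub_nonpos.2 (by exact_mod_cast this)
  have hfiber : ∑ u ∈ S, (t + 1 - ℓ u : R) ≤ ∑ i ∈ Icc 1 t, (t + 1 - i : R) * F i :=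
    calc ∑ u ∈ S, (t + 1 - ℓ u : R)
        ≤ ∑ u ∈ S, ∑ i ∈ Icc 1 t, if ℓ u = i then (t + 1 - i : R) else 0 := sum_le_sum hweight
      _ = ∑ i ∈ Icc 1 t, (t + 1 - i : R) * #{u ∈ S | ℓ u = i} := by
        rw [sum_comm]
        refine sum_congr rfl fun i _ ↦ ?_
        rw [← sum_filter, sum_const, nsmul_eq_mul, mul_comm]
      _ ≤ ∑ i ∈ Icc 1 t, (t + 1 - i : R) * F i := by
        refine sum_le_sum fun i hi ↦ mul_le_mul_of_nonneg_left (hF i hi) (sub_nonneg.2 ?_)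
        exact_mod_cast (mem_Icc.1 hi).2.trans t.le_succ
  simp only [sub_mul, sum_sub_distrib, sum_const, nsmul_eq_mul, ← mul_sum] at hfiber
  refine le_of_mul_le_mul_left (a := (t + 1 : R)) ?_ (by positivity)
  linarith

section Constants

open Real

variable {δ q : ℝ}

lemma mul_log_three_halves (hδ : δ = 3 / (2 * (log 3 - log 2))) : δ * log (3 / 2) = 3 / 2 := by
  have : log 2 < log 3 := log_lt_log (by norm_num) (by norm_num)
  have : log 3 - log 2 ≠ 0 := by linarith
  rw [log_div (by norm_num) (by norm_num), hδ]
  field_simp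

lemma pos_of_eq_three_div (hδ : δ = 3 / (2 * (log 3 - log 2))) : 0 < δ := by
  have hlog : 0 < log (3 / 2) := log_pos (by norm_num)
  exact pos_of_mul_pos_left (by rw [mul_log_three_halves hδ]; norm_num) hlog.le

lemma two_le_mul_log_three_halves (hδ : δ = 3 / (2 * (log 3 - log 2))) (hq : 1 ≤ q) :
    2 ≤ (δ * (log 4 + 2 * log q) + δ + δ * log 2 + 2) * log (3 / 2) := by
  have hδ0 := pos_of_eq_three_div hδ
  have hlogq : 0 ≤ log q := log_nonneg hq
  have hlog : 0 ≤ log (3 / 2) := log_nonneg (by norm_num)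
  calc 2 ≤ 3 / 2 * (1 + log 2) := by linarith [log_two_gt_d9]
    _ = (δ + δ * log 2) * log (3 / 2) := by
      linear_combination (-(1 + log 2)) * mul_log_three_halves hδ
    _ ≤ _ := by
      refine mul_le_mul_of_nonneg_right ?_ hlog
      linarith [show 0 ≤ δ * (log 4 + 2 * log q) by positivity]

lemma sq_le_exp_mul_log (hδ : 0 ≤ δ) (hq : 1 ≤ q) :
    q ^ 2 ≤ exp ((δ * log 2 + 2) * (log 4 + 2 * log q)) := by
  have hlogq : 0 ≤ log q := log_nonneg hq
  have hlog4 : 0 ≤ log 4 := log_nonneg (by norm_num)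
  have hlog2 : 0 ≤ δ * log 2 := mul_nonneg hδ (log_nonneg (by norm_num))
  calc q ^ 2 = exp (2 * log q) := by
        rw [two_mul, exp_add, exp_log (by linarith), sq]
    _ ≤ exp ((δ * log 2 + 2) * (log 4 + 2 * log q)) := by
      refine exp_le_exp.2 ?_
      nlinarith

end Constants

theorem statement10_general {A : Type*} [Fintype A] [Nonempty A] {c₁ c₂ : ℝ}
    (hc₁ : (Fintype.card A : ℝ) ^ 2 ≤ c₁) (hc₂ : 2 ≤ c₂ * Real.log (3 / 2))
    {w : List A} (hrich : IsRichWord w) {ws : List (List A)} (hnodup : ws.Nodup)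
    (hpal : ∀ u ∈ ws, u ≠ [] ∧ IsPalindrome u) (hfactor : ∀ u ∈ ws, u <:+: w) {t : ℕ}
    (hsum : (ws.flatten.length : ℝ) ≤
      ∑ i ∈ Icc 1 t, (i : ℝ) * (⌊c₁ * (i : ℝ) ^ (c₂ * Real.log i)⌋ : ℝ)) :
    (ws.length : ℝ) ≤ ∑ i ∈ Icc 1 t, c₁ * (i : ℝ) ^ (c₂ * Real.log i) := by
  classical
  have hfiber : ∀ i ∈ Icc 1 t, (#{u ∈ ws.toFinset | u.length = i} : ℝ) ≤
      (⌊c₁ * (i : ℝ) ^ (c₂ * Real.log i)⌋ : ℝ) := fun i hi ↦ by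
    have hsub : {u ∈ ws.toFinset | u.length = i} ⊆ palindromesOfLength w i := fun u hu ↦ by
      rw [mem_filter, List.mem_toFinset] at hu
      exact mem_palindromesOfLength.2 ⟨⟨hfactor u hu.1, hu.2⟩, (hpal u hu.1).2⟩
    have hcard := (card_le_card hsub).trans (card_palindromesOfLength_le_card_factorClasses w i)
    have hreal := (Nat.cast_le (α := ℝ).2 hcard).trans
      (hrich.card_factorClasses_le hc₁ hc₂ (mem_Icc.1 hi).1)
    exact_mod_cast Int.le_floor.2 (by exact_mod_cast hreal)
  have htotal : (ws.flatten.length : ℝ) = ∑ u ∈ ws.toFinset, (u.length : ℝ) := by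
    rw [List.length_flatten, ← List.sum_toFinset _ hnodup, Nat.cast_sum]
  have hcount := card_le_sum_of_card_fiber_le
    (fun u hu ↦ List.length_pos_iff.2 (hpal u (List.mem_toFinset.1 hu)).1) hfiber (htotal ▸ hsum)
  rw [List.toFinset_card_of_nodup hnodup] at hcount
  exact hcount.trans (sum_le_sum fun i _ ↦ Int.floor_le _)

/-- With the constants `δ, c₂, d, α, β, c₁` of the paper: if `w` is a finite
nonempty rich word over an alphabet of size `q ≥ 1`, `n = |w|`, and `t` is a
positive integer with `∑_{i=1}^{t} i·⌊c₁ i^{c₂ ln i}⌋ ≥ n`, then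
`LUF(w) ≤ ∑_{i=1}^{t} c₁ i^{c₂ ln i}`. -/
theorem statement10 (A : Type*) [Fintype A] (hq : 1 ≤ Fintype.card A)
    (δ c₂ d α β c₁ : ℝ)
    (hδ : δ = 3 / (2 * (Real.log 3 - Real.log 2)))
    (hc₂ : c₂ = δ * (Real.log 4 + 2 * Real.log (Fintype.card A)) + δ + δ * Real.log 2 + 2)
    (hd0 : 0 < d) (hd1 : d < 1)
    (hα : α = Real.sqrt (1 / c₂))
    (hβ : β = (-1 - d) / (2 * c₂))
    (hc₁ : c₁ = max
      (Real.exp ((δ * Real.log 2 + 2) * (Real.log 4 + 2 * Real.log (Fintype.card A))))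
      (Real.exp (-(β + d * β + c₂ * β ^ 2))))
    (w : List A) (hw : w ≠ []) (hrich : IsRichWord w)
    (t : ℕ) (ht : 0 < t)
    (hsum : (w.length : ℝ) ≤
      ∑ i ∈ Finset.Icc 1 t, (i : ℝ) * (⌊c₁ * (i : ℝ) ^ (c₂ * Real.log i)⌋ : ℝ)) :
    ∀ ws : List (List A), IsUPSFactorization w ws →
      (ws.length : ℝ) ≤ ∑ i ∈ Finset.Icc 1 t, c₁ * (i : ℝ) ^ (c₂ * Real.log i) := by
  rintro ws ⟨-, hnodup, hpal, rfl, -⟩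
  have hq' : (1 : ℝ) ≤ Fintype.card A := by exact_mod_cast hq
  have : Nonempty A := Fintype.card_pos_iff.1 hq
  exact statement10_general
    (hc₁ ▸ (sq_le_exp_mul_log (pos_of_eq_three_div hδ).le hq').trans (le_max_left _ _))
    (hc₂ ▸ two_le_mul_log_three_halves hδ hq') hrich hnodup hpal
    (fun _ ↦ List.infix_of_mem_flatten) hsum
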